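/- Let α > 3/2 be real and let w(t) = ∑_{ℓ=0}^∞ (Γ(α)/(Γ(α+ℓ)·ℓ!))·(−t²/4)^ℓ = ₀F₁(α; −t²/4). Then ∫_ℝ w(t) dt = 2·√π·Γ(α)/Γ(α − 1/2). -/

import Mathlib

open Real MeasureTheory

noncomputable def GG (a u : ℝ) : ℝ := ∑' n : ℕ, u ^ n / (Real.Gamma (a + n) * (n.factorial : ℝ))

lemma gam_mono {a : ℝ} (ha : 1 ≤ a) (n : ℕ) : Real.Gamma a ≤ Real.Gamma (a + n) := by
  induction n with
  | zero => simp
  | succ n ih =>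
    have h0 : (0:ℝ) < a + n := by positivity
    have : a + ((n + 1 : ℕ) : ℝ) = (a + n) + 1 := by push_cast; ring
    rw [this, Real.Gamma_add_one h0.ne']
    have h1 : (0:ℝ) < Real.Gamma (a + n) := Real.Gamma_pos_of_pos h0
    have h2 : (0:ℝ) ≤ n := by positivity
    nlinarith

lemma term_bound {a : ℝ} (ha : 1 ≤ a) (n : ℕ) (y : ℝ) :
    |y / (Real.Gamma (a + n) * (n.factorial : ℝ))| ≤ |y| / (n.factorial : ℝ) / Real.Gamma a := by
  have h1 := gam_mono ha n
  have h2 : 0 < Real.Gamma a := Real.Gamma_pos_of_pos (by linarith)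
  have h3 : (0:ℝ) < n.factorial := by positivity
  rw [abs_div, abs_of_pos (mul_pos (h2.trans_le h1) h3), div_div, mul_comm (n.factorial : ℝ)]
  gcongr

lemma GG_summable {a : ℝ} (ha : 1 ≤ a) (u : ℝ) :
    Summable fun n : ℕ => u ^ n / (Real.Gamma (a + n) * (n.factorial : ℝ)) := by
  refine Summable.of_norm_bounded (g := fun n : ℕ => |u| ^ n / (n.factorial : ℝ) / Real.Gamma a)
    ((Real.summable_pow_div_factorial |u|).div_const _) ?_
  intro n
  have := term_bound ha n (u ^ n)
  rwa [abs_pow] at this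

lemma GG_deriv {a : ℝ} (ha : 1 ≤ a) (u : ℝ) : HasDerivAt (GG a) (GG (a + 1) u) u := by
  set R := |u| + 1
  have hR : 0 < R := by positivity
  have hu : u ∈ Metric.ball (0:ℝ) R := by simp [R]
  have hs : Summable fun n : ℕ => (n * R ^ (n - 1)) / (n.factorial : ℝ) / Real.Gamma a := by
    apply Summable.div_const
    rw [← summable_nat_add_iff 1]
    refine (Real.summable_pow_div_factorial R).congr fun n => ?_
    have : (n.factorial : ℝ) ≠ 0 := by positivity
    rw [Nat.factorial_succ]; push_cast
    field_simp
  have key := hasDerivAt_tsum_of_isPreconnected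
    (g := fun (n : ℕ) (y : ℝ) => y ^ n / (Real.Gamma (a + n) * (n.factorial : ℝ)))
    (g' := fun (n : ℕ) (y : ℝ) => (n * y ^ (n - 1)) / (Real.Gamma (a + n) * (n.factorial : ℝ)))
    hs Metric.isOpen_ball (convex_ball (0:ℝ) R).isPreconnected
    (fun n y _ => (hasDerivAt_pow n y).div_const _)
    (fun n y hy => by
      refine (term_bound ha n _).trans ?_
      have h2 : 0 < Real.Gamma a := Real.Gamma_pos_of_pos (by linarith)
      have hy' : |y| ≤ R := by simpa using (Metric.mem_ball.1 hy).le
      rw [abs_mul, abs_pow, Nat.abs_cast]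
      gcongr)
    hu (GG_summable ha u) hu
  refine key.congr_deriv ?_
  have hs2 : Summable fun n : ℕ => (n * u ^ (n - 1)) / (Real.Gamma (a + n) * (n.factorial : ℝ)) := by
    refine Summable.of_norm_bounded hs fun n => (term_bound ha n _).trans ?_
    have h2 : 0 < Real.Gamma a := Real.Gamma_pos_of_pos (by linarith)
    have hy' : |u| ≤ R := by simp [R]
    rw [abs_mul, abs_pow, Nat.abs_cast]
    gcongr
  rw [hs2.tsum_eq_zero_add, GG]
  simp only [Nat.cast_zero, zero_mul, zero_div, zero_add]
  refine tsum_congr fun n => ?_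
  have : (n.factorial : ℝ) ≠ 0 := by positivity
  have h3 : a + ((n + 1 : ℕ) : ℝ) = a + 1 + n := by push_cast; ring
  have : Real.Gamma (a + 1 + n) ≠ 0 := (Real.Gamma_pos_of_pos (by positivity)).ne'
  rw [Nat.factorial_succ, h3]; push_cast
  field_simp

lemma GG_rec {a : ℝ} (ha : 1 ≤ a) (u : ℝ) :
    GG a u = a * GG (a + 1) u + u * GG (a + 1 + 1) u := by
  have h1 := GG_summable (a := a + 1) (by linarith) u
  have h2 := GG_summable (a := a + 1 + 1) (by linarith) u
  have h0 := GG_summable ha u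
  unfold GG
  rw [← tsum_mul_left, ← tsum_mul_left, h0.tsum_eq_zero_add, (h1.mul_left a).tsum_eq_zero_add,
    add_assoc, ← Summable.tsum_add ((summable_nat_add_iff 1).2 (h1.mul_left a)) (h2.mul_left u)]
  congr 1
  · have : Real.Gamma a ≠ 0 := (Real.Gamma_pos_of_pos (by positivity)).ne'
    simp [Real.Gamma_add_one (show a ≠ 0 by positivity)]
    field_simp
  · refine tsum_congr fun n => ?_
    have hn : (n.factorial : ℝ) ≠ 0 := by positivity
    have e1 : a + ((n + 1 : ℕ) : ℝ) = a + 1 + n := by push_cast; ring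
    have e2 : a + 1 + ((n + 1 : ℕ) : ℝ) = a + 1 + n + 1 := by push_cast; ring
    have e3 : a + 1 + 1 + (n : ℝ) = a + 1 + n + 1 := by ring
    have hp : (0:ℝ) < a + 1 + n := by positivity
    have hg : Real.Gamma (a + 1 + n) ≠ 0 := (Real.Gamma_pos_of_pos hp).ne'
    rw [Nat.factorial_succ, e1, e2, e3, Real.Gamma_add_one hp.ne']; push_cast
    field_simp
    ring

lemma p_deriv {a : ℝ} (ha : 1 ≤ a) (t : ℝ) :
    HasDerivAt (fun t => GG a (-t ^ 2 / 4)) (-(t / 2 * GG (a + 1) (-t ^ 2 / 4))) t := by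
  have h : HasDerivAt (fun t : ℝ => -t ^ 2 / 4) (-t / 2) t := by
    refine (((hasDerivAt_pow 2 t).neg).div_const 4).congr_deriv ?_
    norm_num; ring
  refine ((GG_deriv ha _).comp t h).congr_deriv ?_
  ring

lemma decay {a : ℝ} (ha : 1 ≤ a) : ∃ C, ∀ t : ℝ, 1 ≤ t →
    |GG a (-t ^ 2 / 4)| ≤ C * t ^ (-(a - 1 / 2)) := by
  set k := a - 1 / 2 with hk
  set p : ℝ → ℝ := fun t => GG a (-t ^ 2 / 4) with hp
  set q : ℝ → ℝ := fun t => t / 2 * GG (a + 1) (-t ^ 2 / 4) with hq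
  set r : ℝ → ℝ := fun t => q t - k * p t / t with hr
  have dp : ∀ t, HasDerivAt p (-q t) t := fun t => p_deriv ha t
  have dq : ∀ t, t ≠ 0 → HasDerivAt q (p t - 2 * k / t * q t) t := by
    intro t ht
    refine (((hasDerivAt_id t).div_const 2).mul (p_deriv (a := a + 1) (by linarith) t)).congr_deriv ?_
    have := GG_rec ha (-t ^ 2 / 4)
    simp only [hp, hq, hk, this, id]
    field_simp
    ring
  have dr : ∀ t, t ≠ 0 → HasDerivAt r (p t * (1 + (k - k ^ 2) / t ^ 2) - k * r t / t) t := by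
    intro t ht
    refine ((dq t ht).sub (((dp t).const_mul k).div (hasDerivAt_id t) ht)).congr_deriv ?_
    simp only [hr, id]
    field_simp
    ring
  set c := |k - k ^ 2| with hc
  set F : ℝ → ℝ := fun t => t ^ (2 * k) * (r t ^ 2 + p t ^ 2) * Real.exp (c / t) with hF
  have dF : ∀ t, 0 < t → HasDerivAt F
      (t ^ (2 * k) * Real.exp (c / t) / t ^ 2 *
        (2 * r t * p t * (k - k ^ 2) - c * (r t ^ 2 + p t ^ 2))) t := by
    intro t ht
    have h1 := Real.hasDerivAt_rpow_const (x := t) (p := 2 * k) (Or.inl ht.ne')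
    have h2 := ((dr t ht.ne').pow 2).add ((dp t).pow 2)
    have h3 := ((hasDerivAt_const t c).div (hasDerivAt_id t) ht.ne').exp
    refine ((h1.mul h2).mul h3).congr_deriv ?_
    rw [Real.rpow_sub_one ht.ne']
    have e : q t = r t + k * p t / t := by simp [hr]
    simp only [id, Pi.add_apply, Pi.pow_apply, Pi.mul_apply, Pi.div_apply, e]
    field_simp
    push_cast
    ring
  have anti : AntitoneOn F (Set.Ici 1) := by
    apply antitoneOn_of_deriv_nonpos (convex_Ici 1)
    · exact fun t ht => (dF t (by linarith [Set.mem_Ici.1 ht])).continuousAt.continuousWithinAt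
    · intro t ht
      rw [interior_Ici, Set.mem_Ioi] at ht
      exact (dF t (by linarith)).differentiableAt.differentiableWithinAt
    · intro t ht
      rw [interior_Ici, Set.mem_Ioi] at ht
      have ht0 : 0 < t := by linarith
      rw [(dF t ht0).deriv]
      apply mul_nonpos_of_nonneg_of_nonpos (by positivity)
      have h1 : 2 * r t * p t * (k - k ^ 2) ≤ |2 * r t * p t| * c := by
        rw [hc, ← abs_mul]; exact le_abs_self _
      have h2 : |2 * r t * p t| ≤ r t ^ 2 + p t ^ 2 := by
        rw [abs_le]; constructor <;> nlinarith [sq_nonneg (r t + p t), sq_nonneg (r t - p t)]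
      have h3 : 0 ≤ c := abs_nonneg _
      nlinarith
  refine ⟨Real.sqrt (F 1), fun t ht => ?_⟩
  have ht0 : 0 < t := by linarith
  have h1 := anti (Set.mem_Ici.2 le_rfl) (Set.mem_Ici.2 ht) ht
  have h2 : (t ^ k * p t) ^ 2 ≤ F t := by
    have he : 1 ≤ Real.exp (c / t) := Real.one_le_exp (by positivity)
    have e : t ^ (2 * k) = (t ^ k) ^ 2 := by
      rw [mul_comm, Real.rpow_mul ht0.le]; norm_num
    simp only [hF, e, mul_pow]
    have : 0 ≤ (t ^ k) ^ 2 * (r t ^ 2 + p t ^ 2) := by positivity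
    nlinarith [sq_nonneg (t ^ k * r t)]
  have h3 := Real.abs_le_sqrt (h2.trans h1)
  rw [abs_mul, abs_of_pos (Real.rpow_pos_of_pos ht0 k)] at h3
  rw [Real.rpow_neg ht0.le, ← div_eq_mul_inv, le_div_iff₀ (Real.rpow_pos_of_pos ht0 k), mul_comm]
  exact h3

lemma GG_integrable {a : ℝ} (ha : 3 / 2 < a) : Integrable fun t : ℝ => GG a (-t ^ 2 / 4) := by
  obtain ⟨C, hC⟩ := decay (a := a) (by linarith)
  have hcont : Continuous fun t : ℝ => GG a (-t ^ 2 / 4) :=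
    continuous_iff_continuousAt.2 fun t => (p_deriv (by linarith) t).continuousAt
  refine hcont.locallyIntegrable.integrable_of_isBigO_atTop_of_norm_isNegInvariant
    (g := fun t : ℝ => t ^ (-(a - 1 / 2))) ?_ ?_ ?_
  · exact Filter.Eventually.of_forall fun t => by simp
  · refine Asymptotics.IsBigO.of_bound C ?_
    filter_upwards [Filter.eventually_ge_atTop (1:ℝ)] with t ht
    have h := hC t ht
    rwa [Real.norm_eq_abs, Real.norm_eq_abs, abs_of_pos (Real.rpow_pos_of_pos (by linarith) _)]
  · exact ⟨_, Filter.Ioi_mem_atTop 1, integrableOn_Ioi_rpow_of_lt (by linarith) one_pos⟩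

noncomputable def hh (b x : ℝ) : ℝ := (max 0 (1 - x ^ 2)) ^ b

lemma hh_cont {b : ℝ} (hb : 0 < b) : Continuous (hh b) := by
  unfold hh
  exact (by fun_prop : Continuous fun x : ℝ => max 0 (1 - x ^ 2)).rpow_const
    fun _ => Or.inr hb.le

lemma hh_nonneg (b x : ℝ) : 0 ≤ hh b x := Real.rpow_nonneg (le_max_left _ _) _

lemma hh_zero {b : ℝ} (hb : 0 < b) {x : ℝ} (hx : 1 ≤ |x|) : hh b x = 0 := by
  have : 1 - x ^ 2 ≤ 0 := by
    rw [← sq_abs]; nlinarith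
  rw [hh, max_eq_left this, Real.zero_rpow hb.ne']

lemma hh_supp {b : ℝ} (hb : 0 < b) : HasCompactSupport (hh b) := by
  refine HasCompactSupport.intro (K := Set.Icc (-1) 1) isCompact_Icc fun x hx => hh_zero hb ?_
  by_contra h
  exact hx (abs_le.1 (not_le.1 h).le)

lemma hh_int {b : ℝ} (hb : 0 < b) : Integrable (hh b) :=
  (hh_cont hb).integrable_of_hasCompactSupport (hh_supp hb)

lemma beta_real {u v : ℝ} (hu : 0 < u) (hv : 0 < v) :
    ∫ x in (0:ℝ)..1, x ^ (u - 1) * (1 - x) ^ (v - 1)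
      = Real.Gamma u * Real.Gamma v / Real.Gamma (u + v) := by
  have h := Complex.betaIntegral_eq_Gamma_mul_div (u : ℂ) (v : ℂ) (by simpa) (by simpa)
  rw [← Complex.ofReal_add, Complex.Gamma_ofReal, Complex.Gamma_ofReal, Complex.Gamma_ofReal,
    Complex.betaIntegral] at h
  apply Complex.ofReal_injective
  push_cast
  rw [← h, ← intervalIntegral.integral_ofReal]
  refine intervalIntegral.integral_congr fun x hx => ?_
  rw [Set.uIcc_of_le zero_le_one] at hx
  have h1 : 0 ≤ 1 - x := by linarith [hx.2]
  simp only [Complex.ofReal_mul, Complex.ofReal_cpow hx.1, Complex.ofReal_cpow h1]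
  push_cast
  rfl

lemma gamma_half (n : ℕ) : Real.Gamma (n + 1 / 2) =
    (2 * n).factorial * Real.sqrt Real.pi / (4 ^ n * n.factorial) := by
  induction n with
  | zero => simp only [Nat.cast_zero, zero_add, Real.Gamma_one_half_eq]; simp
  | succ n ih =>
    have e : ((n + 1 : ℕ) : ℝ) + 1 / 2 = (n + 1 / 2) + 1 := by push_cast; ring
    have hn : (n.factorial : ℝ) ≠ 0 := by positivity
    rw [e, Real.Gamma_add_one (by positivity), ih, show 2 * (n + 1) = 2 * n + 1 + 1 by ring,
      Nat.factorial_succ, Nat.factorial_succ, Nat.factorial_succ]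
    push_cast
    field_simp
    ring

lemma moment {b : ℝ} (hb : 0 < b) (n : ℕ) : ∫ x : ℝ, x ^ (2 * n) * hh b x =
    Real.Gamma (n + 1 / 2) * Real.Gamma (b + 1) / Real.Gamma (b + 3 / 2 + n) := by
  have e1 : ∫ x : ℝ, x ^ (2 * n) * hh b x = 2 * ∫ x in Set.Ioi (0:ℝ), x ^ (2 * n) * hh b x := by
    rw [← integral_comp_abs (f := fun x => x ^ (2 * n) * hh b x)]
    congr 1; ext x
    simp [hh, pow_mul]
  have e2 := integral_comp_rpow_Ioi
    (fun y : ℝ => y ^ ((n : ℝ) + 1 / 2 - 1) * (max 0 (1 - y)) ^ b) (p := 2) two_ne_zero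
  rw [e1, ← integral_const_mul]
  have e3 : ∫ x in Set.Ioi (0:ℝ), 2 * (x ^ (2 * n) * hh b x) =
      ∫ y in Set.Ioi (0:ℝ), y ^ ((n : ℝ) + 1 / 2 - 1) * (max 0 (1 - y)) ^ b := by
    rw [← e2]
    refine setIntegral_congr_fun measurableSet_Ioi fun x hx => ?_
    have hx : 0 < x := hx
    have : x ^ (2 * n) = x * (x ^ (2:ℝ)) ^ ((n : ℝ) + 1 / 2 - 1) := by
      rw [← Real.rpow_mul hx.le, ← Real.rpow_natCast]
      nth_rewrite 2 [← Real.rpow_one x]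
      rw [← Real.rpow_add hx]
      congr 1; push_cast; ring
    simp only [smul_eq_mul, this, hh]
    norm_num
    ring
  rw [e3, show b + 3 / 2 + n = ((n : ℝ) + 1 / 2) + (b + 1) by ring,
    ← beta_real (by positivity) (by linarith), intervalIntegral.integral_of_le zero_le_one]
  rw [setIntegral_eq_of_subset_of_forall_sdiff_eq_zero measurableSet_Ioi
    (s := Set.Ioc (0:ℝ) 1) (fun x hx => hx.1)]
  · refine setIntegral_congr_fun measurableSet_Ioc fun x hx => ?_
    simp only [max_eq_right (show 0 ≤ 1 - x by linarith [hx.2]), add_sub_cancel_right]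
  · intro x hx
    have : 1 - x ≤ 0 := by
      by_contra h
      exact hx.2 ⟨hx.1, by linarith⟩
    rw [max_eq_left this, Real.zero_rpow hb.ne', mul_zero]

lemma cos_int {b : ℝ} (hb : 0 < b) (s : ℝ) : ∫ x : ℝ, Real.cos (s * x) * hh b x =
    Real.sqrt Real.pi * Real.Gamma (b + 1) * GG (b + 3 / 2) (-s ^ 2 / 4) := by
  have hsum : Summable fun n : ℕ => |s| ^ (2 * n) / ((2 * n).factorial : ℝ) :=
    (Real.summable_pow_div_factorial |s|).comp_injective
      (i := fun n : ℕ => 2 * n) (fun a b h => by simpa using h)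
  have key := hasSum_integral_of_dominated_convergence (μ := (volume : Measure ℝ))
    (F := fun (n : ℕ) (x : ℝ) => (-1) ^ n * (s * x) ^ (2 * n) / ((2 * n).factorial : ℝ) * hh b x)
    (f := fun x => Real.cos (s * x) * hh b x)
    (fun n x => |s| ^ (2 * n) / ((2 * n).factorial : ℝ) * hh b x)
    (fun n => by
      have := hh_cont hb
      exact (by fun_prop : Continuous fun x : ℝ =>
        (-1) ^ n * (s * x) ^ (2 * n) / ((2 * n).factorial : ℝ) * hh b x).aestronglyMeasurable)
    (fun n => Filter.Eventually.of_forall fun x => by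
      rcases le_total 1 |x| with h | h
      · simp [hh_zero hb h]
      · simp only [norm_mul, norm_div, norm_pow, norm_neg, norm_one, one_pow, one_mul,
          Real.norm_eq_abs, abs_of_nonneg (hh_nonneg b x), Nat.abs_cast]
        refine mul_le_mul_of_nonneg_right ?_ (hh_nonneg b x)
        gcongr
        exact mul_le_of_le_one_right (abs_nonneg s) h)
    (Filter.Eventually.of_forall fun x => hsum.mul_right _)
    (by simp_rw [tsum_mul_right]; exact (hh_int hb).const_mul _)
    (Filter.Eventually.of_forall fun x => (Real.hasSum_cos (s * x)).mul_right _)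
  rw [← key.tsum_eq, GG, ← tsum_mul_left]
  refine tsum_congr fun n => ?_
  have e : ∀ x : ℝ, (-1) ^ n * (s * x) ^ (2 * n) / ((2 * n).factorial : ℝ) * hh b x =
      ((-1) ^ n * s ^ (2 * n) / ((2 * n).factorial : ℝ)) * (x ^ (2 * n) * hh b x) := by
    intro x; rw [mul_pow]; ring
  simp_rw [e]
  rw [integral_const_mul, moment hb, gamma_half]
  have h1 : (n.factorial : ℝ) ≠ 0 := by positivity
  have h2 : ((2 * n).factorial : ℝ) ≠ 0 := by positivity
  have h3 : Real.Gamma (b + 3 / 2 + n) ≠ 0 := (Real.Gamma_pos_of_pos (by positivity)).ne'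
  have h4 : (-s ^ 2 / 4) ^ n = (-1) ^ n * s ^ (2 * n) / 4 ^ n := by
    rw [div_pow, neg_pow, pow_mul]
  rw [h4]
  field_simp

lemma sin_int (b s : ℝ) : ∫ x : ℝ, Real.sin (s * x) * hh b x = 0 := by
  have h := integral_neg_eq_self (fun x : ℝ => Real.sin (s * x) * hh b x) volume
  have e : ∀ x : ℝ, Real.sin (s * -x) * hh b (-x) = -(Real.sin (s * x) * hh b x) := by
    intro x; simp [hh]
  simp_rw [e] at h
  rw [integral_neg] at h
  linarith

open FourierTransform in
lemma four {b : ℝ} (hb : 0 < b) (ξ : ℝ) : 𝓕 (fun x : ℝ => (hh b x : ℂ)) ξ =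
    ((Real.sqrt Real.pi * Real.Gamma (b + 1) * GG (b + 3 / 2) (-(2 * π * ξ) ^ 2 / 4) : ℝ) : ℂ) := by
  rw [Real.fourier_real_eq_integral_exp_smul]
  have hc := hh_cont hb
  have i1 : Integrable fun x : ℝ => ((Real.cos (2 * π * ξ * x) * hh b x : ℝ) : ℂ) :=
    ((by fun_prop : Continuous fun x : ℝ => Real.cos (2 * π * ξ * x) * hh b x
      ).integrable_of_hasCompactSupport (hh_supp hb).mul_left).ofReal
  have i2 : Integrable fun x : ℝ => ((Real.sin (2 * π * ξ * x) * hh b x : ℝ) : ℂ) :=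
    ((by fun_prop : Continuous fun x : ℝ => Real.sin (2 * π * ξ * x) * hh b x
      ).integrable_of_hasCompactSupport (hh_supp hb).mul_left).ofReal
  have e : ∀ x : ℝ, Complex.exp (((-2 * π * x * ξ : ℝ) : ℂ) * Complex.I) • (hh b x : ℂ) =
      ((Real.cos (2 * π * ξ * x) * hh b x : ℝ) : ℂ) -
        Complex.I * ((Real.sin (2 * π * ξ * x) * hh b x : ℝ) : ℂ) := by
    intro x
    rw [Complex.exp_mul_I, ← Complex.ofReal_cos, ← Complex.ofReal_sin,
      show -2 * π * x * ξ = -(2 * π * ξ * x) by ring, Real.cos_neg, Real.sin_neg, smul_eq_mul]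
    push_cast
    ring
  simp_rw [e]
  rw [integral_sub i1 (i2.const_mul _), integral_const_mul, integral_complex_ofReal,
    integral_complex_ofReal, sin_int, cos_int hb]
  simp

open FourierTransform in
lemma GG_integral {b : ℝ} (hb : 0 < b) :
    Real.sqrt Real.pi * Real.Gamma (b + 1) * ∫ t : ℝ, GG (b + 3 / 2) (-t ^ 2 / 4) = 2 * π := by
  have hI := GG_integrable (a := b + 3 / 2) (by linarith)
  have h2pi : (2 * π) ≠ 0 := by positivity
  have hF : 𝓕 (fun x : ℝ => (hh b x : ℂ)) = fun ξ : ℝ =>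
    ((Real.sqrt Real.pi * Real.Gamma (b + 1) * GG (b + 3 / 2) (-(2 * π * ξ) ^ 2 / 4) : ℝ) : ℂ) :=
    funext (four hb)
  have hFI : Integrable (𝓕 (fun x : ℝ => (hh b x : ℂ))) := by
    rw [hF]
    exact ((hI.comp_mul_left' h2pi).const_mul _).ofReal
  have inv := Continuous.fourierInv_fourier_eq (f := fun x : ℝ => (hh b x : ℂ))
    (Complex.continuous_ofReal.comp (hh_cont hb)) (hh_int hb).ofReal hFI
  have inv0 := congrFun inv 0
  rw [Real.fourierInv_eq', hF] at inv0
  simp only [inner_zero_right, mul_zero, Complex.ofReal_zero, zero_mul, Complex.exp_zero,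
    one_smul] at inv0
  rw [integral_complex_ofReal, integral_const_mul,
    Measure.integral_comp_mul_left (fun t : ℝ => GG (b + 3 / 2) (-t ^ 2 / 4))] at inv0
  have h0 : hh b 0 = 1 := by simp [hh]
  rw [h0] at inv0
  have := Complex.ofReal_injective inv0
  rw [abs_of_pos (by positivity), smul_eq_mul] at this
  generalize (∫ t : ℝ, GG (b + 3 / 2) (-t ^ 2 / 4)) = J at this ⊢
  field_simp at this
  linarith

/-- The total integral of `w(t) = ₀F₁(α; -t²/4)` over `ℝ` equals
`2√π·Γ(α)/Γ(α-1/2)`. -/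
theorem stmt_11 (α : ℝ) (hα : 3 / 2 < α)
    (w : ℝ → ℝ)
    (hw : w = fun t : ℝ => ∑' ℓ : ℕ,
      Real.Gamma α / (Real.Gamma (α + ℓ) * (Nat.factorial ℓ : ℝ)) * (-t ^ 2 / 4) ^ ℓ) :
    ∫ t : ℝ, w t = 2 * Real.sqrt Real.pi * Real.Gamma α / Real.Gamma (α - 1 / 2) := by
  have e : w = fun t : ℝ => Real.Gamma α * GG α (-t ^ 2 / 4) := by
    rw [hw]; ext t
    rw [GG, ← tsum_mul_left]
    refine tsum_congr fun n => ?_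
    ring
  have h := GG_integral (b := α - 3 / 2) (by linarith)
  rw [show α - 3 / 2 + 1 = α - 1 / 2 by ring, sub_add_cancel] at h
  have hg : 0 < Real.Gamma (α - 1 / 2) := Real.Gamma_pos_of_pos (by linarith)
  have hs : 0 < Real.sqrt Real.pi := Real.sqrt_pos.2 Real.pi_pos
  have hp : Real.sqrt Real.pi * Real.sqrt Real.pi = Real.pi := Real.mul_self_sqrt Real.pi_pos.le
  rw [e, integral_const_mul, eq_div_iff hg.ne']
  apply mul_left_cancel₀ hs.ne'
  linear_combination Real.Gamma α * h - 2 * Real.Gamma α * hp
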